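/- For the unweighted three-dimensional step set S = {(1,0,1), (-1,0,1), (0,1,-1), (0,-1,-1)}, the number s_n of walks of length n taking steps in S, starting at the origin, and remaining in ℕ^3 satisfies s_n = (4^n / n^{3/2}) · ( 4√2/π^{3/2} + O(1/n) ) as n → ∞; in particular the n^{-1/2}-order correction term in the asymptotic expansion vanishes. -/

import Mathlib

open Finset Filter
open scoped Classical Real

noncomputable section

/-- The number of walks of length `n` with steps in `S`, starting at the origin and
never leaving `ℕ^d` (all partial sums have nonnegative coordinates). -/
def numWalks (d : ℕ) (S : Finset (Fin d → ℤ)) (n : ℕ) : ℕ :=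
  Finset.card (Finset.univ.filter fun f : Fin n → {i // i ∈ S} =>
    ∀ m : ℕ, m ≤ n → ∀ j : Fin d,
      0 ≤ ∑ k ∈ Finset.univ.filter (fun k : Fin n => (k : ℕ) < m), ((f k : Fin d → ℤ) j))

/-- Total weight of walks of length `n` with steps in `S` (weighted by `w`),
starting at the origin and never leaving `ℕ^d`. -/
def walkWeight (d : ℕ) (S : Finset (Fin d → ℤ)) (w : (Fin d → ℤ) → ℝ) (n : ℕ) : ℝ :=
  ∑ f : Fin n → {i // i ∈ S},
    if ∀ m : ℕ, m ≤ n → ∀ j : Fin d,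
        0 ≤ ∑ k ∈ Finset.univ.filter (fun k : Fin n => (k : ℕ) < m), ((f k : Fin d → ℤ) j)
    then ∏ k : Fin n, w (f k) else 0

/-- walks from an arbitrary start -/
def NW (d : ℕ) (S : Finset (Fin d → ℤ)) (n : ℕ) (x : Fin d → ℤ) : ℕ :=
  Finset.card (Finset.univ.filter fun f : Fin n → {i // i ∈ S} =>
    ∀ m : ℕ, m ≤ n → ∀ j : Fin d,
      0 ≤ x j + ∑ k ∈ Finset.univ.filter (fun k : Fin n => (k : ℕ) < m), ((f k : Fin d → ℤ) j))

lemma NW_zero_start (d : ℕ) (S : Finset (Fin d → ℤ)) (n : ℕ) : numWalks d S n = NW d S n 0 := by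
  simp [numWalks, NW]

lemma NW_neg (d : ℕ) (S : Finset (Fin d → ℤ)) (n : ℕ) (x : Fin d → ℤ) (j : Fin d) (h : x j < 0) :
    NW d S n x = 0 := by
  unfold NW
  rw [Finset.card_eq_zero, Finset.filter_eq_empty_iff]
  intro f _ hf
  have := hf 0 (Nat.zero_le _) j
  simp at this
  omega

lemma NW_zero (d : ℕ) (S : Finset (Fin d → ℤ)) (x : Fin d → ℤ) (h : ∀ j, 0 ≤ x j) :
    NW d S 0 x = 1 := by
  unfold NW
  rw [Finset.filter_true_of_mem]
  · simp
  · intro f _ m _ j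
    simp [h j]

lemma sum_cons_lt (d n m : ℕ) (S : Finset (Fin d → ℤ)) (s : {i // i ∈ S})
    (f : Fin n → {i // i ∈ S}) (j : Fin d) :
    ∑ k ∈ Finset.univ.filter (fun k : Fin (n+1) => (k : ℕ) < m + 1),
      (((Fin.cons s f : Fin (n+1) → {i // i ∈ S}) k : Fin d → ℤ) j)
    = (s : Fin d → ℤ) j + ∑ k ∈ Finset.univ.filter (fun k : Fin n => (k : ℕ) < m),
      ((f k : Fin d → ℤ) j) := by
  rw [Finset.sum_filter, Fin.sum_univ_succ, Finset.sum_filter]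
  simp

lemma NW_succ (d : ℕ) (S : Finset (Fin d → ℤ)) (n : ℕ) (x : Fin d → ℤ) (h : ∀ j, 0 ≤ x j) :
    NW d S (n+1) x = ∑ s ∈ S, NW d S n (x + s) := by
  rw [← Finset.sum_coe_sort S (fun s => NW d S n (x + s))]
  unfold NW
  rw [← Finset.card_sigma]
  symm
  refine Finset.card_bij (fun p _ => (Fin.cons p.1 p.2 : Fin (n+1) → {i // i ∈ S})) ?_ ?_ ?_
  · rintro ⟨s, f⟩ hf
    simp only [Finset.mem_sigma, Finset.mem_filter, Finset.mem_univ, true_and] at hf ⊢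
    intro m hm j
    rcases m with _ | m
    · simp [h j]
    · rw [sum_cons_lt]
      have := hf m (by omega) j
      simp only [Pi.add_apply] at this
      omega
  · rintro ⟨s, f⟩ _ ⟨s', f'⟩ _ he
    have := Fin.cons_injective2 he
    obtain ⟨rfl, rfl⟩ := this
    rfl
  · intro g hg
    refine ⟨⟨g 0, Fin.tail g⟩, ?_, by simp⟩
    simp only [Finset.mem_sigma, Finset.mem_filter, Finset.mem_univ, true_and] at hg ⊢
    intro m hm j
    have := hg (m+1) (by omega) j
    rw [← Fin.cons_self_tail g, sum_cons_lt] at this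
    simp only [Pi.add_apply]
    omega

/-- half-line walk counts -/
def rr : ℕ → ℕ → ℝ
  | 0, _ => 1
  | n+1, x => rr n (x+1) + if x = 0 then 0 else rr n (x-1)

/-- transfer operator -/
def PP (f : ℕ → ℕ → ℕ → ℝ) : ℕ → ℕ → ℕ → ℝ := fun a b z =>
  f (a+1) b (z+1) + if z = 0 then 0 else f a (b+1) (z-1)

lemma PP_add (n : ℕ) : ∀ (f g : ℕ → ℕ → ℕ → ℝ), PP^[n] (f + g) = PP^[n] f + PP^[n] g := by
  induction n with
  | zero => intro f g; rfl
  | succ n ih =>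
    intro f g
    rw [Function.iterate_succ_apply', Function.iterate_succ_apply', Function.iterate_succ_apply', ih]
    funext a b z
    simp only [PP, Pi.add_apply]
    split_ifs <;> ring

lemma PP_smul (n : ℕ) (c : ℝ) : ∀ (f : ℕ → ℕ → ℕ → ℝ), PP^[n] (c • f) = c • PP^[n] f := by
  induction n with
  | zero => intro f; rfl
  | succ n ih =>
    intro f
    rw [Function.iterate_succ_apply', Function.iterate_succ_apply', ih]
    funext a b z
    simp only [PP, Pi.smul_apply, smul_eq_mul]
    split_ifs <;> ring

lemma PP_shift (n i j : ℕ) : ∀ (f : ℕ → ℕ → ℕ → ℝ) (a b z : ℕ),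
    PP^[n] f (a+i) (b+j) z = PP^[n] (fun a b z => f (a+i) (b+j) z) a b z := by
  induction n with
  | zero => intro f a b z; rfl
  | succ n ih =>
    intro f a b z
    rw [Function.iterate_succ_apply', Function.iterate_succ_apply']
    simp only [PP]
    rw [← ih, ← ih, show a + i + 1 = a + 1 + i by ring, show b + j + 1 = b + 1 + j by ring]

lemma PP_mono (n : ℕ) (f g : ℕ → ℕ → ℕ → ℝ) : ∀ (a b z : ℕ) (_ : a = b + z)
    (_ : ∀ a' b' z', a' = b' + z' → a' + b' = a + b + n → f a' b' z' ≤ g a' b' z'),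
    PP^[n] f a b z ≤ PP^[n] g a b z := by
  induction n with
  | zero => intro a b z h1 h2; exact h2 a b z h1 (by omega)
  | succ n ih =>
    intro a b z h1 h2
    rw [Function.iterate_succ_apply', Function.iterate_succ_apply']
    simp only [PP]
    have e1 := ih (a+1) b (z+1) (by omega) (fun a' b' z' h h' => h2 a' b' z' h (by omega))
    split_ifs with hz
    · linarith
    · have e2 := ih a (b+1) (z-1) (by omega) (fun a' b' z' h h' => h2 a' b' z' h (by omega))
      linarith

abbrev S3 : Finset (Fin 3 → ℤ) := {![1, 0, 1], ![-1, 0, 1], ![0, 1, -1], ![0, -1, -1]}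

lemma S3_sum (F : (Fin 3 → ℤ) → ℕ) : ∑ s ∈ S3, F s =
    F ![1, 0, 1] + F ![-1, 0, 1] + F ![0, 1, -1] + F ![0, -1, -1] := by
  unfold S3
  rw [Finset.sum_insert, Finset.sum_insert, Finset.sum_insert, Finset.sum_singleton]
  · ring
  · intro h
    simp only [Finset.mem_singleton] at h
    have := congrFun h 1
    simp at this
  · intro h
    simp only [Finset.mem_insert, Finset.mem_singleton] at h
    rcases h with h | h <;> have := congrFun h 0 <;> simp at this
  · intro h
    simp only [Finset.mem_insert, Finset.mem_singleton] at h
    rcases h with h | h | h <;> have := congrFun h 0 <;> norm_num at this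

def ff (x y : ℕ) : ℕ → ℕ → ℕ → ℝ := fun a b _ => rr a x * rr b y

lemma NW_eq (n : ℕ) : ∀ x y z : ℕ,
    (NW 3 S3 n ![(x:ℤ), (y:ℤ), (z:ℤ)] : ℝ) = PP^[n] (ff x y) 0 0 z := by
  induction n with
  | zero =>
    intro x y z
    rw [NW_zero]
    · simp [ff, rr]
    · intro j; fin_cases j <;> simp
  | succ n ih =>
    intro x y z
    have hpos : ∀ j, 0 ≤ (![(x:ℤ), (y:ℤ), (z:ℤ)] : Fin 3 → ℤ) j := by
      intro j; fin_cases j <;> simp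
    rw [NW_succ _ _ _ _ hpos, S3_sum]
    rw [Function.iterate_succ_apply']
    simp only [PP]
    have sh1 := PP_shift n 1 0 (ff x y) 0 0 (z+1)
    have sh2 := PP_shift n 0 1 (ff x y) 0 0 (z-1)
    simp only [Nat.zero_add, Nat.add_zero] at sh1 sh2
    rw [Nat.zero_add, sh1, sh2]
    have e1 : (NW 3 S3 n (![(x:ℤ), (y:ℤ), (z:ℤ)] + ![1,0,1]) : ℝ)
        = PP^[n] (ff (x+1) y) 0 0 (z+1) := by
      rw [← ih]; congr 3; funext j; fin_cases j <;> simp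
    have e2 : (NW 3 S3 n (![(x:ℤ), (y:ℤ), (z:ℤ)] + ![-1,0,1]) : ℝ)
        = if x = 0 then 0 else PP^[n] (ff (x-1) y) 0 0 (z+1) := by
      split_ifs with hx
      · rw [NW_neg _ _ _ _ 0 (by simp [hx])]; simp
      · rw [← ih]; congr 3; funext j; fin_cases j <;> simp; omega
    have e3 : (NW 3 S3 n (![(x:ℤ), (y:ℤ), (z:ℤ)] + ![0,1,-1]) : ℝ)
        = if z = 0 then 0 else PP^[n] (ff x (y+1)) 0 0 (z-1) := by
      split_ifs with hx
      · rw [NW_neg _ _ _ _ 2 (by simp [hx])]; simp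
      · rw [← ih]; congr 3; funext j; fin_cases j <;> simp; omega
    have e4 : (NW 3 S3 n (![(x:ℤ), (y:ℤ), (z:ℤ)] + ![0,-1,-1]) : ℝ)
        = if z = 0 then 0 else if y = 0 then 0 else PP^[n] (ff x (y-1)) 0 0 (z-1) := by
      split_ifs with hz hy
      · rw [NW_neg _ _ _ _ 2 (by simp [hz])]; simp
      · rw [NW_neg _ _ _ _ 1 (by simp [hy])]; simp
      · rw [← ih]; congr 3; funext j; fin_cases j <;> simp <;> omega
    push_cast
    rw [e1, e2, e3, e4]
    have k1 : (fun a b z => ff x y (a+1) b z) = ff (x+1) y + (if x = 0 then (0:ℝ) else 1) • ff (x-1) y := by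
      funext a b z
      simp only [ff, rr, Pi.add_apply, Pi.smul_apply, smul_eq_mul]
      split_ifs <;> ring
    have k2 : (fun a b z => ff x y a (b+1) z) = ff x (y+1) + (if y = 0 then (0:ℝ) else 1) • ff x (y-1) := by
      funext a b z
      simp only [ff, rr, Pi.add_apply, Pi.smul_apply, smul_eq_mul]
      split_ifs <;> ring
    rw [k1, k2, PP_add, PP_add, PP_smul, PP_smul]
    simp only [Pi.add_apply, Pi.smul_apply, smul_eq_mul]
    split_ifs <;> ring

lemma main_eq (n : ℕ) : (numWalks 3 S3 n : ℝ) = PP^[n] (ff 0 0) 0 0 0 := by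
  rw [NW_zero_start, ← NW_eq]
  congr 2; funext j; fin_cases j <;> simp

/-! closed form of `rr` -/

def SS (n m : ℕ) : ℝ := ∑ i ∈ Finset.range m, (n.choose i : ℝ)

lemma SS_succ (n m : ℕ) : SS (n+1) m = SS n m + SS n (m-1) := by
  unfold SS
  rcases m with _ | m
  · simp
  · rw [Finset.sum_range_succ', Finset.sum_range_succ' (fun i => (n.choose i : ℝ)) m]
    simp only [Nat.choose_succ_succ, Nat.choose_zero_right]
    push_cast
    rw [Finset.sum_add_distrib]
    simp only [Nat.succ_eq_add_one]
    ring

lemma rr_eq (n : ℕ) : ∀ z, rr n z = SS n ((n+z)/2+1) - SS n ((n+z)/2 - z) := by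
  induction n with
  | zero =>
    intro z
    have : (0 + z)/2 - z = 0 := by omega
    rw [this]
    simp [rr, SS, Finset.sum_range_succ']
  | succ n ih =>
    intro z
    simp only [rr]
    rw [SS_succ, SS_succ, ih (z+1), ih (z-1)]
    rw [show n + (z+1) = n + 1 + z by ring]
    split_ifs with hz
    · subst hz
      simp
      ring
    · rw [show (n + (z-1))/2 + 1 = (n+1+z)/2 by omega,
        show (n + (z-1))/2 - (z-1) = (n+1+z)/2 - z by omega,
        show (n+1+z)/2 + 1 - 1 = (n+1+z)/2 by omega,
        show (n+1+z)/2 - z - 1 = (n+1+z)/2 - (z+1) by omega]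
      ring

lemma rr_choose (n : ℕ) : rr n 0 = (n.choose (n/2) : ℝ) := by
  rw [rr_eq]
  simp [SS, Finset.sum_range_succ]

/-- normalised -/
def al (n : ℕ) : ℝ := rr n 0 / 2 ^ n

lemma al_zero : al 0 = 1 := by simp [al, rr]

lemma al_pos (n : ℕ) : 0 < al n := by
  unfold al
  rw [rr_choose]
  have : 0 < n.choose (n/2) := Nat.choose_pos (Nat.div_le_self _ _)
  positivity

lemma al_even_sq (m : ℕ) : al (2*m) ^ 2 * (2*m+1) * Real.Wallis.W m = 1 := by
  unfold al
  rw [rr_choose, Real.Wallis.W_eq_factorial_ratio]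
  have h : ((2*m).choose (2*m/2) : ℝ) = ((2*m).factorial : ℝ) / (m.factorial)^2 := by
    rw [show 2*m/2 = m by omega, Nat.cast_choose ℝ (by omega), show 2*m - m = m by omega, sq]
  rw [h]
  have h1 : ((2*m).factorial : ℝ) ≠ 0 := by positivity
  have h2 : (m.factorial : ℝ) ≠ 0 := by positivity
  have h3 : (2 * (m:ℝ) + 1) ≠ 0 := by positivity
  rw [show 4 * m = 2*m+2*m by ring, pow_add]
  field_simp

lemma al_odd (m : ℕ) : al (2*m+1) = al (2*m+2) := by
  unfold al
  rw [rr_choose, rr_choose, show (2*m+1)/2 = m by omega, show (2*m+2)/2 = m+1 by omega]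
  have : (2*m+2).choose (m+1) = 2 * (2*m+1).choose m := by
    rw [Nat.choose_succ_succ (2*m+1) m, Nat.choose_symm_half]; ring
  rw [this, pow_succ 2 (2*m+1)]
  push_cast
  field_simp

lemma al_even_lower (m : ℕ) : 2 ≤ π * (2*m+1) * al (2*m) ^ 2 := by
  have h := al_even_sq m
  have hW := Real.Wallis.W_le m
  have : 0 ≤ al (2*m)^2 * (2*m+1) := by positivity
  nlinarith [mul_le_mul_of_nonneg_left hW this]

lemma al_even_upper (m : ℕ) : π * (2*m) * al (2*m) ^ 2 ≤ 2 := by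
  have h := al_even_sq m
  have hW := Real.Wallis.le_W m
  have h0 : 0 ≤ al (2*m)^2 * (2*m+1) := by positivity
  have h1 := mul_le_mul_of_nonneg_left hW h0
  rw [h] at h1
  have h2 : ((2:ℝ) * m) ≤ (2*m+1) * ((2*m+1)/(2*m+2)) := by
    rw [← mul_div_assoc, le_div_iff₀ (by positivity)]
    nlinarith
  have h3 : 0 ≤ π * al (2*m)^2 := by positivity
  have h4 := mul_le_mul_of_nonneg_left h2 h3
  nlinarith

lemma al_lower (n : ℕ) : 2 ≤ π * (n+2) * al n ^ 2 := by
  obtain ⟨m, rfl | rfl⟩ := Nat.even_or_odd' n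
  · have := al_even_lower m
    have h3 : 0 ≤ π * al (2*m)^2 := by positivity
    push_cast
    nlinarith
  · have := al_even_lower (m+1)
    rw [al_odd]
    push_cast at this ⊢
    rw [show 2*(m+1) = 2*m+2 by ring] at this
    have h3 : 0 ≤ π * al (2*m+2)^2 := by positivity
    nlinarith

lemma al_upper (n : ℕ) : π * n * al n ^ 2 ≤ 2 := by
  obtain ⟨m, rfl | rfl⟩ := Nat.even_or_odd' n
  · have := al_even_upper m
    push_cast
    exact this
  · have := al_even_upper (m+1)
    rw [al_odd]
    push_cast at this ⊢
    rw [show 2*(m+1) = 2*m+2 by ring] at this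
    have h3 : 0 ≤ π * al (2*m+2)^2 := by positivity
    nlinarith

lemma al_le_one (n : ℕ) : al n ≤ 1 := by
  rcases Nat.eq_zero_or_pos n with rfl | hn
  · rw [al_zero]
  · have h := al_upper n
    have h1 : (1:ℝ) ≤ n := by exact_mod_cast hn
    have h2 := Real.pi_gt_three
    have h3 := al_pos n
    by_contra hc
    push Not at hc
    have : 1 < al n ^ 2 := by nlinarith
    have : 3 ≤ π * n := by nlinarith
    nlinarith

def t0 : ℕ → ℕ → ℕ → ℝ := fun _ _ _ => 1
def t2 : ℕ → ℕ → ℕ → ℝ := fun _ _ z => ((z:ℝ)+1)^2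
def t4 : ℕ → ℕ → ℕ → ℝ := fun _ _ z => ((z:ℝ)+1)^4

lemma PP_t0 (n : ℕ) : ∀ a b z, PP^[n] t0 a b z = rr n z := by
  induction n with
  | zero => intro a b z; rfl
  | succ n ih =>
    intro a b z
    rw [Function.iterate_succ_apply']
    simp only [PP, rr, ih]

lemma PP_t2 : PP t2 = (2:ℝ) • t2 + (2:ℝ) • t0 := by
  funext a b z
  rcases z with _ | z
  · simp [PP, t2, t0]; norm_num
  · simp [PP, t2, t0]; ring

lemma PP_t4 : PP t4 = (2:ℝ) • t4 + ((12:ℝ) • t2 + (2:ℝ) • t0) := by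
  funext a b z
  rcases z with _ | z
  · simp [PP, t4, t2, t0]; norm_num
  · simp [PP, t4, t2, t0]; ring

def AA (n : ℕ) : ℝ := PP^[n] t2 0 0 0 / 2^n
def DD (n : ℕ) : ℝ := PP^[n] t4 0 0 0 / 2^n

lemma AA_succ (n : ℕ) : AA (n+1) = AA n + al n := by
  unfold AA al
  rw [Function.iterate_succ_apply, PP_t2, PP_add, PP_smul, PP_smul]
  simp only [Pi.add_apply, Pi.smul_apply, smul_eq_mul, PP_t0]
  rw [pow_succ]
  field_simp

lemma DD_succ (n : ℕ) : DD (n+1) = DD n + (6 * AA n + al n) := by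
  unfold DD AA al
  rw [Function.iterate_succ_apply, PP_t4, PP_add, PP_add, PP_smul, PP_smul, PP_smul]
  simp only [Pi.add_apply, Pi.smul_apply, smul_eq_mul, PP_t0]
  rw [pow_succ]
  field_simp
  ring

lemma AA_le (n : ℕ) : AA n ≤ 1 + 3 * Real.sqrt n := by
  induction n with
  | zero => simp [AA, t2]
  | succ n ih =>
    rw [AA_succ]
    have hu := al_upper n
    have h1 := al_le_one n
    have h0 := al_pos n
    have hpi := Real.pi_gt_three
    have hs := Real.sq_sqrt (Nat.cast_nonneg (α := ℝ) n)
    have hs' := Real.sq_sqrt (Nat.cast_nonneg (α := ℝ) (n+1))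
    have p1 := Real.sqrt_nonneg (n:ℝ)
    have p2 : 0 < Real.sqrt ((n+1 : ℕ):ℝ) := Real.sqrt_pos.mpr (by positivity)
    set s := Real.sqrt (n:ℝ)
    set s' := Real.sqrt ((n+1 : ℕ):ℝ)
    push_cast at hs'
    have hle : s ≤ s' := by
      apply Real.sqrt_le_sqrt; push_cast; linarith
    have h3 : 3 * ((n:ℝ) * al n ^ 2) ≤ 2 := by
      have : 0 ≤ (n:ℝ) * al n^2 := by positivity
      nlinarith
    have h4 : (al n * s')^2 ≤ (3/2)^2 := by
      rw [mul_pow, hs']; nlinarith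
    have h5 : al n * s' ≤ 3/2 := by
      apply le_of_sq_le_sq _ (by norm_num)
      exact h4
    have h6 : al n * (s' + s) ≤ 3 := by nlinarith
    have h7 : (s' - s) * (s'+s) = 1 := by nlinarith
    have h8 : 0 < s' + s := by linarith
    have h9 : al n ≤ 3 * (s' - s) := by
      by_contra hc
      push Not at hc
      nlinarith [mul_lt_mul_of_pos_right hc h8]
    linarith

lemma DD_le (n : ℕ) : DD n ≤ 1 + n * (7 + 18 * Real.sqrt n) := by
  induction n with
  | zero => simp [DD, t4]
  | succ n ih =>
    rw [DD_succ]
    have h1 := al_le_one n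
    have h2 := AA_le n
    have hle : Real.sqrt (n:ℝ) ≤ Real.sqrt ((n+1:ℕ):ℝ) := by
      apply Real.sqrt_le_sqrt; push_cast; linarith
    have hn : (0:ℝ) ≤ n := Nat.cast_nonneg n
    have := mul_le_mul_of_nonneg_left hle hn
    push_cast at hle this ⊢
    nlinarith

lemma pt_lower (a b n : ℕ) (h : a + b = n) : 4 / (π * (n + 4)) ≤ al a * al b := by
  have ha := al_lower a
  have hb := al_lower b
  have pa := al_pos a
  have pb := al_pos b
  have hpi := Real.pi_pos
  have hn : (n:ℝ) = a + b := by exact_mod_cast h.symm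
  rw [div_le_iff₀ (by positivity)]
  apply le_of_sq_le_sq _ (by positivity)
  have h1 : (2:ℝ) * 2 ≤ (π * (a+2) * al a ^ 2) * (π * (b+2) * al b ^ 2) :=
    mul_le_mul ha hb (by norm_num) (by linarith)
  have h2 : 4 * (((a:ℝ)+2) * (b+2)) ≤ (n+4)^2 := by
    rw [hn]; nlinarith [sq_nonneg ((a:ℝ) - b)]
  have h3 : 0 ≤ (π * al a * al b)^2 := by positivity
  nlinarith [mul_le_mul_of_nonneg_left h2 h3]

lemma pt_upper (a b z n : ℕ) (h : a + b = n) (hz : a = b + z) (hn : 2 ≤ n) :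
    al a * al b ≤ 4 / (π * n) * (1 + ((z:ℝ)+1)^2 / n^2 + ((z:ℝ)+1)^4/n^3) := by
  have hpi := Real.pi_pos
  have hpi3 := Real.pi_gt_three
  have hpi4 := Real.pi_lt_four
  have pa := al_pos a
  have pb := al_pos b
  have hnR : (2:ℝ) ≤ n := by exact_mod_cast hn
  have hn0 : (0:ℝ) < n := by linarith
  have hz0 : (0:ℝ) ≤ z := Nat.cast_nonneg z
  -- replace z + 1 by z
  have key : al a * al b ≤ 4 / (π * n) * (1 + (z:ℝ)^2 / n^2 + (z:ℝ)^4/n^3) := by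
    rcases Nat.eq_zero_or_pos b with hb | hb
    · subst hb
      have hzn : z = n := by omega
      rw [hzn]
      have e : 4 / (π * n) * (1 + (n:ℝ)^2 / n^2 + (n:ℝ)^4/n^3) = 4/π + 8 / (π * n) := by
        field_simp; ring
      rw [e]
      have h1 : (1:ℝ) ≤ 4/π := by rw [le_div_iff₀ hpi]; linarith
      have h2 : 0 < 8 / (π * n) := by positivity
      have h3 := al_le_one a
      have h4 := al_le_one 0
      nlinarith
    · have ha : 1 ≤ a := by omega
      have haR : (1:ℝ) ≤ a := by exact_mod_cast ha
      have hbR : (1:ℝ) ≤ b := by exact_mod_cast hb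
      have hnab : (n:ℝ) = a + b := by exact_mod_cast h.symm
      have hzab : (a:ℝ) = b + z := by exact_mod_cast hz
      have ua := al_upper a
      have ub := al_upper b
      set G : ℝ := 1 + (z:ℝ)^2 / n^2 + (z:ℝ)^4/n^3 with hG
      have hG1 : 1 ≤ G := by
        have : 0 ≤ (z:ℝ)^2 / n^2 + (z:ℝ)^4/n^3 := by positivity
        linarith
      have hq : 4 * ((a:ℝ) * b) = n^2 - z^2 := by
        have : (z:ℝ) = a - b := by linarith
        rw [hnab, this]; ring
      have hq2 : 2 * (n:ℝ) ≤ n^2 - z^2 := by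
        rw [← hq]; nlinarith [mul_nonneg (sub_nonneg.mpr haR) (sub_nonneg.mpr hbR)]
      have hG2 : (n:ℝ)^2 ≤ (n^2 - z^2) * G := by
        have e : ((n:ℝ)^2 - z^2) * G = n^2 + z^4 / n^3 * (n^2 - z^2 - n) := by
          rw [hG]; field_simp; ring
        rw [e]
        have : 0 ≤ (z:ℝ)^4 / n^3 * (n^2 - z^2 - n) := by
          apply mul_nonneg (by positivity); linarith
        linarith
      have hG3 : (n:ℝ)^2 ≤ (n^2 - z^2) * G^2 := by
        have : 0 ≤ ((n:ℝ)^2 - z^2) * G := by nlinarith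
        nlinarith
      have hp : (π * a * al a ^ 2) * (π * b * al b ^ 2) ≤ 2 * 2 :=
        mul_le_mul ua ub (by positivity) (by norm_num)
      have hp2 : (n^2 - z^2) * (π * (al a * al b))^2 ≤ 16 := by
        rw [← hq]; nlinarith
      have hfin : (n * (π * (al a * al b)))^2 ≤ (4 * G)^2 := by
        have s1 : 0 ≤ (π * (al a * al b))^2 := by positivity
        have := mul_le_mul_of_nonneg_left hG3 s1
        have s2 := mul_le_mul_of_nonneg_right hp2 (sq_nonneg G)
        nlinarith
      have hf := le_of_sq_le_sq hfin (by linarith)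
      rw [div_mul_eq_mul_div, le_div_iff₀ (by positivity)]
      nlinarith
  refine key.trans ?_
  have : (z:ℝ) ≤ z + 1 := by linarith
  gcongr

lemma ff_eq (a b z n : ℕ) (h : a + b = n) : ff 0 0 a b z = 2^n * (al a * al b) := by
  unfold ff al
  rw [← h, pow_add]
  field_simp

lemma sn_lower (n : ℕ) : 4 / (π * (n + 4)) * al n ≤ PP^[n] (ff 0 0) 0 0 0 / 4^n := by
  have h := PP_mono n (((2:ℝ)^n * (4 / (π * (n + 4)))) • t0) (ff 0 0) 0 0 0 rfl (by
    intro a b z h1 h2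
    rw [ff_eq a b z n (by omega)]
    simp only [Pi.smul_apply, t0, smul_eq_mul, mul_one]
    exact mul_le_mul_of_nonneg_left (pt_lower a b n (by omega)) (by positivity))
  rw [PP_smul] at h
  simp only [Pi.smul_apply, smul_eq_mul, PP_t0] at h
  rw [le_div_iff₀ (by positivity)]
  refine le_trans (le_of_eq ?_) h
  unfold al
  rw [show (4:ℝ) = 2 * 2 by norm_num, mul_pow]
  field_simp

lemma sn_upper (n : ℕ) (hn : 2 ≤ n) : PP^[n] (ff 0 0) 0 0 0 / 4^n ≤
    4 / (π * n) * (al n + AA n / n^2 + DD n / n^3) := by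
  have hn0 : (0:ℝ) < n := by exact_mod_cast (by omega : 0 < n)
  have h := PP_mono n (ff 0 0) (((2:ℝ)^n * (4 / (π * n))) •
      (t0 + (((1:ℝ) / n^2) • t2 + ((1:ℝ)/n^3) • t4))) 0 0 0 rfl (by
    intro a b z h1 h2
    rw [ff_eq a b z n (by omega)]
    simp only [Pi.smul_apply, Pi.add_apply, t0, t2, t4, smul_eq_mul]
    rw [mul_assoc]
    refine mul_le_mul_of_nonneg_left ?_ (by positivity)
    refine (pt_upper a b z n (by omega) h1 hn).trans (le_of_eq ?_)
    ring)
  rw [PP_smul, PP_add, PP_add, PP_smul, PP_smul] at h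
  simp only [Pi.smul_apply, Pi.add_apply, smul_eq_mul, PP_t0] at h
  rw [div_le_iff₀ (by positivity)]
  refine h.trans (le_of_eq ?_)
  unfold al AA DD
  rw [show (4:ℝ)^n = 2^n * 2^n by rw [← mul_pow]; norm_num]
  field_simp
  ring

lemma final_bound (n : ℕ) (hn : 2 ≤ n) :
    |PP^[n] (ff 0 0) 0 0 0 / 4^n - 4 / (π * n) * Real.sqrt (2 / (π * n))|
      ≤ 40 / (n^2 * Real.sqrt n) := by
  have hpi := Real.pi_pos
  have hpi3 := Real.pi_gt_three
  have hnR : (2:ℝ) ≤ n := by exact_mod_cast hn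
  have hn0 : (0:ℝ) < n := by linarith
  have hl := sn_lower n
  have hu := sn_upper n hn
  have hA := AA_le n
  have hD := DD_le n
  have al0 := al_pos n
  have alu := al_upper n
  have all := al_lower n
  set X := PP^[n] (ff 0 0) 0 0 0 / 4^n
  have hq := Real.sq_sqrt (show 0 ≤ 2 / (π * n) by positivity)
  have hq0 : 0 < Real.sqrt (2 / (π * n)) := Real.sqrt_pos.mpr (by positivity)
  set q := Real.sqrt (2 / (π * n))
  have hs := Real.sq_sqrt hn0.le
  have hs0 : 0 < Real.sqrt (n:ℝ) := Real.sqrt_pos.mpr hn0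
  set s := Real.sqrt (n:ℝ)
  have hs1 : 1 ≤ s := by nlinarith
  have hq' : π * n * q^2 = 2 := by rw [hq]; field_simp
  have hqs : q * s ≤ 1 := by
    apply le_of_sq_le_sq _ (by norm_num)
    rw [mul_pow, hs]; nlinarith [mul_pos hn0 (pow_pos hq0 2)]
  have hal_q : al n ≤ q := by
    apply le_of_sq_le_sq _ hq0.le
    rw [hq, le_div_iff₀ (by positivity)]; linarith
  have hal_q2 : q * n / (n+2) ≤ al n := by
    apply le_of_sq_le_sq _ al0.le
    rw [div_pow, div_le_iff₀ (by positivity)]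
    have e1 : π * (q * n)^2 = 2 * n := by linear_combination n * hq'
    have e2 : 2 * ((n:ℝ)+2) ≤ π * (al n ^ 2 * (n+2)^2) := by nlinarith
    have : π * (q*n)^2 ≤ π * (al n ^ 2 * (n+2)^2) := by linarith
    exact le_of_mul_le_mul_left this hpi
  rw [abs_le]
  constructor
  · have h1 : 4 / (π * n) * q - 8 / (n^2 * s) ≤ 4 / (π * (n+4)) * (q * n / (n+2)) := by
      have e : 4 / (π * n) * q - 4 / (π * (n+4)) * (q * n / (n+2))
          = (4 / π) * q * ((6 * n + 8) / (n * (n+4) * (n+2))) := by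
        field_simp; ring
      have h4 : 4 / π ≤ 4 / 3 := by gcongr
      have h5 : (6 * (n:ℝ) + 8) / (n * (n+4) * (n+2)) ≤ 6 / n^2 := by
        rw [div_le_div_iff₀ (by positivity) (by positivity)]; nlinarith [pow_pos hn0 2]
      have h6 : q ≤ 1 / s := by rw [le_div_iff₀ hs0]; exact hqs
      have h7 : (4 / π) * q * ((6 * n + 8) / (n * (n+4) * (n+2))) ≤ (4/3) * (1/s) * (6 / n^2) := by
        gcongr
      have h8 : (4/3) * (1/s) * (6 / (n:ℝ)^2) = 8 / (n^2 * s) := by field_simp; norm_num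
      linarith
    have h2 : 4 / (π * (n+4)) * (q * n / (n+2)) ≤ 4 / (π * (n+4)) * al n := by gcongr
    have h3 : 8 / ((n:ℝ)^2 * s) ≤ 40 / (n^2 * s) := by gcongr; norm_num
    linarith
  · have hA' : AA n ≤ 4 * s := by linarith
    have hD' : DD n ≤ 26 * (n * s) := by
      have : (1:ℝ) ≤ n := by linarith
      nlinarith [mul_nonneg (sub_nonneg.mpr this) (sub_nonneg.mpr hs1)]
    have h1 : 4 / (π * n) * (al n + AA n / n^2 + DD n / n^3)
        ≤ 4 / (π * n) * (q + 4 * s / n^2 + 26 * (n*s) / n^3) := by gcongr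
    have h2 : 4 / (π * n) * (q + 4 * s / n^2 + 26 * (n*s) / n^3)
        = 4 / (π * n) * q + (120 / π) * (s / n^3) := by field_simp; ring
    have h3 : s / (n:ℝ)^3 = 1 / (n^2 * s) := by
      rw [div_eq_div_iff (by positivity) (by positivity)]
      linear_combination n^2 * hs
    have h4 : 120 / π ≤ 40 := by rw [div_le_iff₀ hpi]; linarith
    have h5 : (120 / π) * (s / (n:ℝ)^3) ≤ 40 * (1 / (n^2 * s)) := by
      rw [h3]; gcongr
    have h6 : 40 * (1 / ((n:ℝ)^2 * s)) = 40 / (n^2 * s) := by ring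
    linarith

/-- For the 3D step set `{(±1,0,1), (0,±1,-1)}`, the number of octant walks satisfies
`s_n = (4^n/n^{3/2})(4√2/π^{3/2} + O(1/n))`: the `n^{-1/2}`-order correction term in
the asymptotic expansion vanishes. -/
theorem threeD_example_vanishing_correction :
    ∃ C : ℝ, ∀ᶠ n : ℕ in atTop,
      |(numWalks 3 ({![1, 0, 1], ![-1, 0, 1], ![0, 1, -1], ![0, -1, -1]} :
            Finset (Fin 3 → ℤ)) n : ℝ) -
          4 ^ n / (n : ℝ) ^ ((3 : ℝ) / 2) * (4 * Real.sqrt 2 / π ^ ((3 : ℝ) / 2))|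
        ≤ C * 4 ^ n / (n : ℝ) ^ ((5 : ℝ) / 2) := by
  refine ⟨40, ?_⟩
  filter_upwards [eventually_ge_atTop 2] with n hn
  have hb := final_bound n hn
  have hpi := Real.pi_pos
  have hn0 : (0:ℝ) < n := by exact_mod_cast (by omega : 0 < n)
  have hm := main_eq n
  unfold S3 at hm
  rw [hm]
  have r1 : ∀ x : ℝ, 0 < x → x ^ ((3:ℝ)/2) = x * Real.sqrt x := by
    intro x hx
    rw [show (3:ℝ)/2 = 1 + 1/2 by norm_num, Real.rpow_add hx, Real.rpow_one, Real.sqrt_eq_rpow]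
  have r2 : (n:ℝ) ^ ((5:ℝ)/2) = n^2 * Real.sqrt n := by
    rw [show (5:ℝ)/2 = 2 + 1/2 by norm_num, Real.rpow_add hn0, Real.rpow_two, Real.sqrt_eq_rpow]
  rw [r1 n hn0, r1 π hpi, r2]
  rw [Real.sqrt_div (by norm_num), Real.sqrt_mul hpi.le] at hb
  have e : PP^[n] (ff 0 0) 0 0 0 - 4 ^ n / (n * Real.sqrt n) * (4 * Real.sqrt 2 / (π * Real.sqrt π))
     = 4^n * (PP^[n] (ff 0 0) 0 0 0 / 4^n -
        4 / (π * n) * (Real.sqrt 2 / (Real.sqrt π * Real.sqrt n))) := by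
    have : Real.sqrt π ≠ 0 := (Real.sqrt_pos.mpr hpi).ne'
    have : Real.sqrt n ≠ 0 := (Real.sqrt_pos.mpr hn0).ne'
    field_simp
  rw [e, abs_mul, abs_of_pos (by positivity)]
  calc _ ≤ (4:ℝ)^n * (40 / (n^2 * Real.sqrt n)) := by gcongr
    _ = _ := by ring

end
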